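/- Let B ≥ 1, α > 0, 0 < q < ∞, and let f : (0,∞) → [0,∞) be a measurable function of class GM(B). Then there exists a constant C = C(α,q,B) such that (∫_0^∞ (x^{−α} ∫_0^x f(t) dt/t)^q dx/x)^{1/q} ≤ C·(∫_0^∞ (x^{−α} f(x))^q dx/x)^{1/q}. -/

import Mathlib

open MeasureTheory Real Set
open scoped ENNReal

/-- `f ∈ GM(B)` (real-valued): `f` is of bounded variation on every compact subinterval of
`(0,∞)` and `V_f([x,2x]) ≤ B |f(x)|` for every `x > 0`. -/
def GMr (B : ℝ) (f : ℝ → ℝ) : Prop :=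
  (∀ a b : ℝ, 0 < a → a ≤ b → BoundedVariationOn f (Set.Icc a b)) ∧
  ∀ x : ℝ, 0 < x → eVariationOn f (Set.Icc x (2 * x)) ≤ ENNReal.ofReal (B * |f x|)

/-!
Only the pointwise consequence `f t ≤ K f y` for `0 < y ≤ t ≤ 2 y` of general monotonicity matters.
Cutting `(0, x]` into the blocks `(2^{-k-1} x, 2^{-k} x]` and bounding `f` on each by its value at
the left endpoint gives, with `g x = x^{-α} f x`,
`x^{-α} ∫_0^x f(t) dt/t ≤ K ∑_k 2^{-(k+1)α} g(2^{-k-1} x)`.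
The measure `dx/x` is dilation invariant, so each dilate of `g` has the same `q`-th moment. Of the
two halves of the weight `2^{-(k+1)α/2} · 2^{-(k+1)α/2}`, one pays for moving the `q`-th power
inside the sum, for `q < 1` and `q ≥ 1` alike, and the other for summing the moments.
-/

open scoped NNReal

/-- The weakly monotone functions on `(0, ∞)`: up to the factor `K`, the value at `y` bounds all
values on `[y, 2y]`. This is the part of the class `GM(B)` on which Hardy's inequality depends. -/
def WeaklyMonotone (K : ℝ≥0) (f : ℝ → ℝ≥0∞) : Prop :=
  ∀ ⦃y t : ℝ⦄, 0 < y → t ∈ Icc y (2 * y) → f t ≤ K * f y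

lemma GMr.weaklyMonotone_enorm {B : ℝ} {f : ℝ → ℝ} (hf : GMr B f) :
    WeaklyMonotone (1 + B.toNNReal) (fun x ↦ ‖f x‖ₑ) := by
  intro y t hy ht
  have hvar : ‖f t - f y‖ₑ ≤ B.toNNReal * ‖f y‖ₑ := calc
    ‖f t - f y‖ₑ = edist (f t) (f y) := (edist_eq_enorm_sub _ _).symm
    _ ≤ eVariationOn f (Icc y (2 * y)) := eVariationOn.edist_le f ht ⟨le_rfl, by linarith⟩
    _ ≤ ENNReal.ofReal (B * |f y|) := hf.2 y hy
    _ = B.toNNReal * ‖f y‖ₑ := by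
      rw [ENNReal.ofReal_mul' (abs_nonneg _), Real.enorm_eq_ofReal_abs, ENNReal.ofReal]
  calc ‖f t‖ₑ = ‖f y + (f t - f y)‖ₑ := by rw [add_sub_cancel]
    _ ≤ ‖f y‖ₑ + ‖f t - f y‖ₑ := enorm_add_le _ _
    _ ≤ ‖f y‖ₑ + B.toNNReal * ‖f y‖ₑ := by gcongr
    _ = (1 + B.toNNReal : ℝ≥0) * ‖f y‖ₑ := by push_cast; ring

lemma rpow_tsum_mul_le {ι : Type*} {q : ℝ} (hq : 0 < q) (a b : ι → ℝ≥0∞) :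
    (∑' i, a i * b i) ^ q ≤ (∑' i, a i) ^ q * ∑' i, b i ^ q := by
  have hb (i : ι) : b i ≤ (∑' j, b j ^ q) ^ q⁻¹ :=
    (ENNReal.le_rpow_inv_iff hq).2 (ENNReal.le_tsum i)
  calc (∑' i, a i * b i) ^ q ≤ (∑' i, a i * (∑' j, b j ^ q) ^ q⁻¹) ^ q := by
        gcongr with i
        exact hb i
    _ = (∑' i, a i) ^ q * ∑' i, b i ^ q := by
        rw [ENNReal.tsum_mul_right, ENNReal.mul_rpow_of_nonneg _ _ hq.le,
          ENNReal.rpow_inv_rpow hq.ne']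

lemma tsum_pow_succ_rpow_ne_top {r : ℝ≥0∞} (hr : r < 1) {β : ℝ} (hβ : 0 < β) :
    ∑' k : ℕ, (r ^ (k + 1)) ^ β ≠ ∞ := by
  have hrβ : r ^ β < 1 := ENNReal.rpow_lt_one hr hβ
  have hgeom (k : ℕ) : (r ^ (k + 1)) ^ β = (r ^ β) ^ (k + 1) := by
    rw [← ENNReal.rpow_natCast_mul, ← ENNReal.rpow_mul_natCast, mul_comm]
  simp_rw [hgeom, ENNReal.tsum_geometric_add_one]
  exact ENNReal.mul_ne_top hrβ.ne_top (ENNReal.inv_ne_top.2 (tsub_pos_of_lt hrβ).ne')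

lemma lintegral_Ioi_comp_mul_left_div (F : ℝ → ℝ≥0∞) {c : ℝ} (hc : 0 < c) :
    ∫⁻ x in Ioi 0, F (c * x) / ENNReal.ofReal x = ∫⁻ x in Ioi 0, F x / ENNReal.ofReal x := by
  have hcv := lintegral_image_eq_lintegral_abs_deriv_mul (measurableSet_Ioi (a := (0 : ℝ)))
    (fun x _ ↦ (hasDerivAt_const_mul c).hasDerivWithinAt) (mul_right_injective₀ hc.ne').injOn
    (fun x ↦ F x / ENNReal.ofReal x)
  rw [image_mul_left_Ioi hc, mul_zero] at hcv
  rw [hcv]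
  refine setLIntegral_congr_fun measurableSet_Ioi fun x _ ↦ ?_
  rw [abs_of_pos hc, ENNReal.ofReal_mul hc.le, ← mul_div_assoc,
    ENNReal.mul_div_mul_left _ _ (ENNReal.ofReal_pos.2 hc).ne' ENNReal.ofReal_ne_top]

lemma lintegral_rpow_tsum_dilation_le {ι : Type*} [Countable ι] {q : ℝ} (hq : 0 < q)
    (a b : ι → ℝ≥0∞) {c : ι → ℝ} (hc : ∀ i, 0 < c i) {g : ℝ → ℝ≥0∞} (hg : Measurable g) :
    ∫⁻ x in Ioi 0, (∑' i, a i * (b i * g (c i * x))) ^ q / ENNReal.ofReal x ≤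
      (∑' i, a i) ^ q * (∑' i, b i ^ q) * ∫⁻ x in Ioi 0, g x ^ q / ENNReal.ofReal x := by
  have hpt (x : ℝ) : (∑' i, a i * (b i * g (c i * x))) ^ q / ENNReal.ofReal x ≤
      (∑' i, a i) ^ q * ∑' i, b i ^ q * (g (c i * x) ^ q / ENNReal.ofReal x) := by
    simp_rw [← mul_div_assoc, ← ENNReal.mul_rpow_of_nonneg _ _ hq.le, div_eq_mul_inv,
      ENNReal.tsum_mul_right, ← mul_assoc _ (tsum _)]
    gcongr
    exact rpow_tsum_mul_le hq _ _
  calc ∫⁻ x in Ioi 0, (∑' i, a i * (b i * g (c i * x))) ^ q / ENNReal.ofReal x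
      ≤ ∫⁻ x in Ioi 0,
          (∑' i, a i) ^ q * ∑' i, b i ^ q * (g (c i * x) ^ q / ENNReal.ofReal x) :=
        lintegral_mono hpt
    _ = (∑' i, a i) ^ q *
          ∑' i, b i ^ q * ∫⁻ x in Ioi 0, g (c i * x) ^ q / ENNReal.ofReal x := by
        rw [lintegral_const_mul _ (by fun_prop), lintegral_tsum (fun i ↦ by fun_prop)]
        congr! 3 with i
        exact lintegral_const_mul _ (by fun_prop)
    _ = (∑' i, a i) ^ q * (∑' i, b i ^ q) * ∫⁻ x in Ioi 0, g x ^ q / ENNReal.ofReal x := by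
        simp_rw [fun i ↦ lintegral_Ioi_comp_mul_left_div (fun x ↦ g x ^ q) (hc i),
          ENNReal.tsum_mul_right, mul_assoc]

lemma Ioc_zero_subset_iUnion_Ioc_pow_mul {r : ℝ} (hr₀ : 0 < r) (hr₁ : r < 1) (x : ℝ) :
    Ioc 0 x ⊆ ⋃ k : ℕ, Ioc (r ^ (k + 1) * x) (r ^ k * x) := by
  rintro t ⟨ht, htx⟩
  have hx : 0 < x := ht.trans_le htx
  obtain ⟨k, hlt, hle⟩ :=
    exists_nat_pow_near_of_lt_one (div_pos ht hx) ((div_le_one hx).2 htx) hr₀ hr₁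
  exact mem_iUnion.2 ⟨k, (lt_div_iff₀ hx).1 hlt, (div_le_iff₀ hx).1 hle⟩

lemma ofReal_rpow_neg_eq_mul {r x : ℝ} (hr : 0 < r) (hx : 0 < x) (α : ℝ) :
    ENNReal.ofReal (x ^ (-α)) = ENNReal.ofReal r ^ α * ENNReal.ofReal ((r * x) ^ (-α)) := by
  rw [ENNReal.ofReal_rpow_of_pos hr, ← ENNReal.ofReal_mul (by positivity),
    Real.mul_rpow hr.le hx.le, ← mul_assoc, ← Real.rpow_add hr, add_neg_cancel, Real.rpow_zero,
    one_mul]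

namespace WeaklyMonotone

variable {K : ℝ≥0} {f : ℝ → ℝ≥0∞}

lemma setLIntegral_Ioc_div_le (hf : WeaklyMonotone K f) {y : ℝ} (hy : 0 < y) :
    ∫⁻ t in Ioc y (2 * y), f t / ENNReal.ofReal t ≤ K * f y := calc
  ∫⁻ t in Ioc y (2 * y), f t / ENNReal.ofReal t
      ≤ ∫⁻ _ in Ioc y (2 * y), K * f y / ENNReal.ofReal y := by
        refine setLIntegral_mono' measurableSet_Ioc fun t ht ↦ ?_
        gcongr
        exacts [hf hy (Ioc_subset_Icc_self ht), ht.1.le]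
    _ = K * f y := by
        rw [setLIntegral_const, Real.volume_Ioc, two_mul, add_sub_cancel_right,
          ENNReal.div_mul_cancel (ENNReal.ofReal_pos.2 hy).ne' ENNReal.ofReal_ne_top]

lemma setLIntegral_Ioc_zero_div_le (hf : WeaklyMonotone K f) {x : ℝ} (hx : 0 < x) :
    ∫⁻ t in Ioc 0 x, f t / ENNReal.ofReal t ≤ K * ∑' k : ℕ, f (2⁻¹ ^ (k + 1) * x) := by
  have hblock (k : ℕ) : (2⁻¹ : ℝ) ^ k * x = 2 * (2⁻¹ ^ (k + 1) * x) := by ring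
  calc ∫⁻ t in Ioc 0 x, f t / ENNReal.ofReal t
      ≤ ∫⁻ t in ⋃ k : ℕ, Ioc (2⁻¹ ^ (k + 1) * x) (2⁻¹ ^ k * x), f t / ENNReal.ofReal t :=
        lintegral_mono_set
          (Ioc_zero_subset_iUnion_Ioc_pow_mul (by norm_num) (by norm_num) x)
    _ ≤ ∑' k : ℕ, ∫⁻ t in Ioc (2⁻¹ ^ (k + 1) * x) (2⁻¹ ^ k * x), f t / ENNReal.ofReal t :=
        lintegral_iUnion_le _ _
    _ ≤ ∑' k : ℕ, K * f (2⁻¹ ^ (k + 1) * x) := by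
        gcongr with k
        rw [hblock k]
        exact hf.setLIntegral_Ioc_div_le (by positivity)
    _ = K * ∑' k : ℕ, f (2⁻¹ ^ (k + 1) * x) := ENNReal.tsum_mul_left

lemma ofReal_rpow_mul_setLIntegral_le (hf : WeaklyMonotone K f) (α : ℝ) {x : ℝ} (hx : 0 < x) :
    ENNReal.ofReal (x ^ (-α)) * ∫⁻ t in Ioc 0 x, f t / ENNReal.ofReal t ≤
      K * ∑' k : ℕ, (2⁻¹ ^ (k + 1)) ^ α *
        (ENNReal.ofReal ((2⁻¹ ^ (k + 1) * x) ^ (-α)) * f (2⁻¹ ^ (k + 1) * x)) := by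
  have hweight (k : ℕ) : ENNReal.ofReal (x ^ (-α)) =
      (2⁻¹ ^ (k + 1)) ^ α * ENNReal.ofReal ((2⁻¹ ^ (k + 1) * x) ^ (-α)) := by
    rw [ofReal_rpow_neg_eq_mul (r := 2⁻¹ ^ (k + 1)) (by positivity) hx,
      ENNReal.ofReal_pow (by norm_num), ENNReal.ofReal_inv_of_pos two_pos, ENNReal.ofReal_ofNat]
  calc ENNReal.ofReal (x ^ (-α)) * ∫⁻ t in Ioc 0 x, f t / ENNReal.ofReal t
      ≤ ENNReal.ofReal (x ^ (-α)) * (K * ∑' k : ℕ, f (2⁻¹ ^ (k + 1) * x)) := by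
        gcongr
        exact hf.setLIntegral_Ioc_zero_div_le hx
    _ = K * ∑' k : ℕ, ENNReal.ofReal (x ^ (-α)) * f (2⁻¹ ^ (k + 1) * x) := by
        rw [mul_left_comm, ENNReal.tsum_mul_left]
    _ = _ := by
        congr! 3 with k
        rw [hweight k, mul_assoc]

lemma lintegral_rpow_hardy_le (hf : WeaklyMonotone K f) (hfm : Measurable f) {q : ℝ} (hq : 0 < q)
    (α : ℝ) :
    ∫⁻ x in Ioi 0, (ENNReal.ofReal (x ^ (-α)) *
        ∫⁻ t in Ioc 0 x, f t / ENNReal.ofReal t) ^ q / ENNReal.ofReal x ≤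
      (K * ∑' k : ℕ, (2⁻¹ ^ (k + 1)) ^ (α / 2)) ^ q * (∑' k : ℕ, (2⁻¹ ^ (k + 1)) ^ (α / 2 * q)) *
        ∫⁻ x in Ioi 0, (ENNReal.ofReal (x ^ (-α)) * f x) ^ q / ENNReal.ofReal x := by
  set a : ℕ → ℝ≥0∞ := fun k ↦ (2⁻¹ ^ (k + 1)) ^ (α / 2) with ha
  set g : ℝ → ℝ≥0∞ := fun x ↦ ENNReal.ofReal (x ^ (-α)) * f x with hg
  have hsplit (k : ℕ) : ((2⁻¹ : ℝ≥0∞) ^ (k + 1)) ^ α = a k * a k := by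
    rw [← ENNReal.rpow_add _ _ (by simp) (by simp), add_halves]
  have hpt (x : ℝ) (hx : x ∈ Ioi 0) :
      ENNReal.ofReal (x ^ (-α)) * ∫⁻ t in Ioc 0 x, f t / ENNReal.ofReal t ≤
        ∑' k, K * a k * (a k * g (2⁻¹ ^ (k + 1) * x)) := by
    simpa only [hsplit, mul_assoc, ENNReal.tsum_mul_left]
      using hf.ofReal_rpow_mul_setLIntegral_le α hx
  calc ∫⁻ x in Ioi 0, (ENNReal.ofReal (x ^ (-α)) *
          ∫⁻ t in Ioc 0 x, f t / ENNReal.ofReal t) ^ q / ENNReal.ofReal x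
      ≤ ∫⁻ x in Ioi 0, (∑' k, K * a k * (a k * g (2⁻¹ ^ (k + 1) * x))) ^ q / ENNReal.ofReal x :=
        setLIntegral_mono' measurableSet_Ioi fun x hx ↦ by gcongr; exact hpt x hx
    _ ≤ (∑' k, K * a k) ^ q * (∑' k, a k ^ q) * ∫⁻ x in Ioi 0, g x ^ q / ENNReal.ofReal x :=
        lintegral_rpow_tsum_dilation_le hq _ _ (fun k ↦ by positivity) (by fun_prop)
    _ = _ := by simp only [ha, hg, ENNReal.tsum_mul_left, ENNReal.rpow_mul]

end WeaklyMonotone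

theorem stmt19_general (K : ℝ≥0) (α q : ℝ) (hα : 0 < α) (hq : 0 < q) :
    ∃ C : ℝ, 0 < C ∧
      ∀ f : ℝ → ℝ≥0∞, Measurable f → WeaklyMonotone K f →
        (∫⁻ x in Ioi (0 : ℝ), (ENNReal.ofReal (x ^ (-α)) *
            ∫⁻ t in Ioc (0 : ℝ) x, f t / ENNReal.ofReal t) ^ q / ENNReal.ofReal x) ^ (1 / q) ≤
          ENNReal.ofReal C *
            (∫⁻ x in Ioi (0 : ℝ),
              (ENNReal.ofReal (x ^ (-α)) * f x) ^ q / ENNReal.ofReal x) ^ (1 / q) := by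
  have hq' : 0 ≤ 1 / q := by positivity
  set M : ℝ≥0∞ := (K * ∑' k : ℕ, (2⁻¹ ^ (k + 1)) ^ (α / 2)) ^ q *
    ∑' k : ℕ, (2⁻¹ ^ (k + 1)) ^ (α / 2 * q)
  have hM : M ^ (1 / q) < ∞ := by
    refine ENNReal.rpow_lt_top_of_nonneg hq' (ENNReal.mul_ne_top
      (ENNReal.rpow_ne_top_of_nonneg hq.le (ENNReal.mul_ne_top ENNReal.coe_ne_top ?_)) ?_) <;>
    exact tsum_pow_succ_rpow_ne_top ENNReal.one_half_lt_one (by positivity)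
  obtain ⟨C, hMC, -⟩ := ENNReal.lt_iff_exists_nnreal_btwn.1 hM
  refine ⟨C, by exact_mod_cast pos_of_gt hMC, fun f hfm hf ↦ ?_⟩
  rw [ENNReal.ofReal_coe_nnreal]
  calc _ ≤ (M * ∫⁻ x in Ioi (0 : ℝ),
            (ENNReal.ofReal (x ^ (-α)) * f x) ^ q / ENNReal.ofReal x) ^ (1 / q) := by
        gcongr
        exact hf.lintegral_rpow_hardy_le hfm hq α
    _ ≤ _ := by
        rw [ENNReal.mul_rpow_of_nonneg _ _ hq']
        gcongr

lemma setLIntegral_Ioc_zero_ofReal_div {f : ℝ → ℝ} (hf : ∀ x : ℝ, 0 < x → 0 ≤ f x)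
    (x : ℝ) :
    ∫⁻ t in Ioc 0 x, ENNReal.ofReal (f t / t) = ∫⁻ t in Ioc 0 x, ‖f t‖ₑ / ENNReal.ofReal t :=
  setLIntegral_congr_fun measurableSet_Ioc fun t ht ↦ by
    rw [ENNReal.ofReal_div_of_pos ht.1, Real.enorm_of_nonneg (hf t ht.1)]

lemma lintegral_Ioi_ofReal_rpow_mul {f : ℝ → ℝ} (hf : ∀ x : ℝ, 0 < x → 0 ≤ f x)
    (α q : ℝ) :
    ∫⁻ x in Ioi (0 : ℝ), ENNReal.ofReal (x ^ (-α) * f x) ^ q / ENNReal.ofReal x =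
      ∫⁻ x in Ioi (0 : ℝ), (ENNReal.ofReal (x ^ (-α)) * ‖f x‖ₑ) ^ q / ENNReal.ofReal x :=
  setLIntegral_congr_fun measurableSet_Ioi fun x hx ↦ by
    rw [ENNReal.ofReal_mul (Real.rpow_nonneg (mem_Ioi.1 hx).le _), Real.enorm_of_nonneg (hf x hx)]

/-- Hardy's inequality for general monotone functions: for `α > 0`, `0 < q < ∞`, `B ≥ 1`,
there is `C = C(α,q,B)` such that every measurable nonnegative general monotone `f` of class
`GM(B)` satisfies
`(∫_0^∞ (x^{-α} ∫_0^x f(t) dt/t)^q dx/x)^{1/q} ≤ C (∫_0^∞ (x^{-α} f(x))^q dx/x)^{1/q}`. -/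
theorem stmt19 (B α q : ℝ) (hB : 1 ≤ B) (hα : 0 < α) (hq : 0 < q) :
    ∃ C : ℝ, 0 < C ∧
      ∀ f : ℝ → ℝ, Measurable f → (∀ x : ℝ, 0 < x → 0 ≤ f x) → GMr B f →
        (∫⁻ x in Set.Ioi (0 : ℝ),
            (ENNReal.ofReal (x ^ (-α)) *
              ∫⁻ t in Set.Ioc (0 : ℝ) x, ENNReal.ofReal (f t / t)) ^ q /
              ENNReal.ofReal x) ^ (1 / q) ≤
          ENNReal.ofReal C *
            (∫⁻ x in Set.Ioi (0 : ℝ),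
              ENNReal.ofReal (x ^ (-α) * f x) ^ q / ENNReal.ofReal x) ^ (1 / q) := by
  obtain ⟨C, hC, hHardy⟩ := stmt19_general (1 + B.toNNReal) α q hα hq
  refine ⟨C, hC, fun f hfm hf hGM ↦ ?_⟩
  simpa only [setLIntegral_Ioc_zero_ofReal_div hf, lintegral_Ioi_ofReal_rpow_mul hf]
    using hHardy _ hfm.enorm hGM.weaklyMonotone_enorm
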